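/- Let G be a finite group of odd order n > 1, let q be the smallest prime divisor of n and p the largest prime divisor of n. If (q+1)·ψ(G) ≥ ψ(C_n), then G is solvable and every Sylow p-subgroup of G contains a cyclic subgroup of index p. -/

import Mathlib

/-- `psi G` is the sum of the orders of all elements of the finite group `G`. -/
noncomputable def psi (G : Type*) [Group G] [Fintype G] : ℕ := ∑ x : G, orderOf x

/-- `psiC n` is the sum of the orders of all elements of the cyclic group `C_n`. -/
noncomputable def psiC (n : ℕ) : ℕ := ∑ k ∈ Finset.range n, addOrderOf (k : ZMod n)

/-!
Let `q` and `p` be the least and the greatest prime divisor of `n = |G|`. An element `x` of maximal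
order gives `ψ(G) ≤ n · o(x)`, while multiplicativity of `ψ(C_n)` and a telescoping product over
the primes in `[q, p]` give `n² q ≤ ψ(C_n) (p + 1)`. Hence `ψ(C_n) ≤ 2 (q - 1) ψ(G)` forces `⟨x⟩`
to have index less than `2p`; for odd `n` the constant `2 (q - 1)` is at least `q + 1`. As `p²`
cannot divide this index, a Sylow `p`-subgroup of `⟨x⟩` has index at most `p` in one of `G`.

For solvability, either `⟨x⟩` is a maximal subgroup, which suffices by a theorem of Herstein, or it
contains a normal Sylow `p`-subgroup `P` of `G`. In the latter case `ψ(G) ≤ ψ(P) ψ(K)` for a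
complement `K` of the cyclic group `P`, so `K` inherits the inequality and induction applies.

Herstein's theorem: an abelian maximal subgroup that is not normal becomes malnormal modulo the
center, so transfer yields a normal complement `N` on which it acts without fixed points. Each
Sylow subgroup of `N` fixed by one nontrivial element is then fixed by the whole abelian group.
-/

open scoped Pointwise

universe u

variable {G : Type u} [Group G]

/-! ### Element orders in cyclic groups -/

theorem psi_eq_sum_divisors (G : Type*) [Group G] [Fintype G] [IsCyclic G] :
    psi G = ∑ d ∈ (Fintype.card G).divisors, d.totient * d := by
  classical
  have hmaps : ∀ x ∈ (Finset.univ : Finset G), orderOf x ∈ (Fintype.card G).divisors := fun x _ =>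
    Nat.mem_divisors.2 ⟨orderOf_dvd_card, Fintype.card_ne_zero⟩
  rw [psi, ← Finset.sum_fiberwise_of_maps_to hmaps]
  refine Finset.sum_congr rfl fun d hd => ?_
  rw [Finset.sum_congr rfl fun x hx => (Finset.mem_filter.1 hx).2, Finset.sum_const,
    IsCyclic.card_orderOf_eq_totient (Nat.dvd_of_mem_divisors hd), smul_eq_mul]

theorem psiC_eq_psi (n : ℕ) [NeZero n] : psiC n = psi (Multiplicative (ZMod n)) := by
  refine Finset.sum_bij' (fun k _ => Multiplicative.ofAdd (k : ZMod n))
    (fun x _ => (Multiplicative.toAdd x).val) (by simp) ?_ ?_ ?_ ?_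
  · exact fun x _ => Finset.mem_range.2 (ZMod.val_lt _)
  · exact fun k hk => ZMod.val_cast_of_lt (Finset.mem_range.1 hk)
  · exact fun x _ => congrArg Multiplicative.ofAdd (ZMod.natCast_rightInverse _)
  · exact fun k _ => (orderOf_ofAdd_eq_addOrderOf _).symm

theorem psiC_eq_sum_divisors (n : ℕ) : psiC n = ∑ d ∈ n.divisors, d.totient * d := by
  rcases eq_or_ne n 0 with rfl | hn
  · simp [psiC]
  have : NeZero n := ⟨hn⟩
  rw [psiC_eq_psi, psi_eq_sum_divisors, Fintype.card_multiplicative, ZMod.card]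

theorem psi_eq_psiC_card (G : Type*) [Group G] [Fintype G] [IsCyclic G] :
    psi G = psiC (Fintype.card G) := by
  rw [psi_eq_sum_divisors, psiC_eq_sum_divisors]

theorem psiC_mul_of_coprime {a b : ℕ} (h : a.Coprime b) : psiC (a * b) = psiC a * psiC b := by
  let f : ArithmeticFunction ℕ := ⟨fun d => d.totient * d, mul_zero _⟩
  have hf : f.IsMultiplicative := ⟨one_mul 1, fun {m n} hmn => by
    simp only [f, ArithmeticFunction.coe_mk, Nat.totient_mul hmn]
    ring⟩
  have hpsiC (n : ℕ) : psiC n = (f * ArithmeticFunction.zeta) n := by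
    rw [psiC_eq_sum_divisors, ArithmeticFunction.mul_zeta_apply]
    rfl
  rw [hpsiC, hpsiC, hpsiC,
    (hf.mul ArithmeticFunction.isMultiplicative_zeta).map_mul_of_coprime h]

theorem psiC_prime_pow_mul_succ {r : ℕ} (hr : r.Prime) (a : ℕ) :
    psiC (r ^ a) * (r + 1) = (r ^ a) ^ 2 * r + 1 := by
  rw [psiC_eq_sum_divisors, Nat.sum_divisors_prime_pow hr]
  induction a with
  | zero => simp
  | succ a ih =>
    rw [Finset.sum_range_succ, add_mul, ih, Nat.totient_prime_pow_succ hr]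
    obtain ⟨s, rfl⟩ := Nat.exists_eq_succ_of_ne_zero hr.ne_zero
    rw [Nat.succ_eq_add_one, Nat.add_sub_cancel]
    ring

theorem sq_mul_prod_primeFactors_le_psiC (n : ℕ) :
    n ^ 2 * ∏ r ∈ n.primeFactors, r ≤ psiC n * ∏ r ∈ n.primeFactors, (r + 1) := by
  induction n using Nat.recOnPosPrimePosCoprime with
  | zero => simp
  | one => simp [psiC]
  | prime_pow r a hr ha =>
    rw [Nat.primeFactors_prime_pow ha.ne' hr, Finset.prod_singleton, Finset.prod_singleton,
      psiC_prime_pow_mul_succ hr]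
    exact Nat.le_succ _
  | coprime a b _ _ hab iha ihb =>
    rw [hab.primeFactors_mul, Finset.prod_union hab.disjoint_primeFactors,
      Finset.prod_union hab.disjoint_primeFactors, psiC_mul_of_coprime hab]
    calc _ = (a ^ 2 * ∏ r ∈ a.primeFactors, r) * (b ^ 2 * ∏ r ∈ b.primeFactors, r) := by ring
      _ ≤ _ := Nat.mul_le_mul iha ihb
      _ = _ := by ring

theorem mul_prod_succ_le_mul_prod {a b : ℕ} (hab : a ≤ b) {S : Finset ℕ}
    (hS : S ⊆ Finset.Ico a b) : a * ∏ r ∈ S, (r + 1) ≤ b * ∏ r ∈ S, r := by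
  induction b, hab using Nat.le_induction generalizing S with
  | base => simp_all
  | succ b hab ih =>
    rw [← Finset.insert_Ico_right_eq_Ico_add_one hab, Finset.subset_insert_iff] at hS
    by_cases hb : b ∈ S
    · rw [← Finset.mul_prod_erase S _ hb, ← Finset.mul_prod_erase S _ hb]
      calc _ = (b + 1) * (a * ∏ r ∈ S.erase b, (r + 1)) := by ring
        _ ≤ (b + 1) * (b * ∏ r ∈ S.erase b, r) := Nat.mul_le_mul_left _ (ih hS)
    · rw [Finset.erase_eq_of_notMem hb] at hS
      exact (ih hS).trans (Nat.mul_le_mul_right _ b.le_succ)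

theorem sq_mul_le_psiC_mul {n a b : ℕ} (hab : a ≤ b) (hn : n.primeFactors ⊆ Finset.Ico a b) :
    n ^ 2 * a ≤ psiC n * b := by
  have hpos : 0 < ∏ r ∈ n.primeFactors, r :=
    Finset.prod_pos fun r hr => (Nat.prime_of_mem_primeFactors hr).pos
  refine Nat.le_of_mul_le_mul_right ?_ hpos
  calc _ = a * (n ^ 2 * ∏ r ∈ n.primeFactors, r) := by ring
    _ ≤ a * (psiC n * ∏ r ∈ n.primeFactors, (r + 1)) :=
      Nat.mul_le_mul_left _ (sq_mul_prod_primeFactors_le_psiC n)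
    _ = psiC n * (a * ∏ r ∈ n.primeFactors, (r + 1)) := by ring
    _ ≤ psiC n * (b * ∏ r ∈ n.primeFactors, r) :=
      Nat.mul_le_mul_left _ (mul_prod_succ_le_mul_prod hab hn)
    _ = _ := by ring

/-! ### A cyclic subgroup of small index -/

theorem exists_psi_le_card_mul_orderOf (G : Type*) [Group G] [Fintype G] :
    ∃ x : G, psi G ≤ Fintype.card G * orderOf x := by
  obtain ⟨x, -, hx⟩ := Finset.exists_max_image Finset.univ (orderOf : G → ℕ) Finset.univ_nonempty
  refine ⟨x, (Finset.sum_le_card_nsmul _ _ _ hx).trans ?_⟩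
  rw [Finset.card_univ, smul_eq_mul]

theorem exists_index_zpowers_mul_le [Fintype G] {a b c : ℕ} (hab : a ≤ b)
    (hG : (Fintype.card G).primeFactors ⊆ Finset.Ico a b)
    (hpsi : psiC (Fintype.card G) ≤ c * psi G) :
    ∃ x : G, (Subgroup.zpowers x).index * a ≤ c * b := by
  obtain ⟨x, hx⟩ := exists_psi_le_card_mul_orderOf G
  refine ⟨x, ?_⟩
  have hcard : orderOf x * (Subgroup.zpowers x).index = Fintype.card G := by
    rw [← Nat.card_zpowers, Subgroup.card_mul_index, Nat.card_eq_fintype_card]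
  refine Nat.le_of_mul_le_mul_left ?_ (Nat.mul_pos (Fintype.card_pos (α := G)) (orderOf_pos x))
  calc Fintype.card G * orderOf x * ((Subgroup.zpowers x).index * a)
      = Fintype.card G ^ 2 * a := by rw [← hcard]; ring
    _ ≤ psiC (Fintype.card G) * b := sq_mul_le_psiC_mul hab hG
    _ ≤ c * (Fintype.card G * orderOf x) * b :=
      Nat.mul_le_mul_right _ (hpsi.trans (Nat.mul_le_mul_left _ hx))
    _ = Fintype.card G * orderOf x * (c * b) := by ring

theorem exists_index_zpowers_lt [Fintype G] {p Q : ℕ} (hQ : 0 < Q)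
    (hp : p ∈ (Fintype.card G).primeFactors)
    (hge : ∀ r ∈ (Fintype.card G).primeFactors, Q ≤ r)
    (hle : ∀ r ∈ (Fintype.card G).primeFactors, r ≤ p)
    (hpsi : psiC (Fintype.card G) ≤ 2 * (Q - 1) * psi G) :
    ∃ x : G, (Subgroup.zpowers x).index < 2 * p := by
  have hQp := hge p hp
  obtain ⟨x, hx⟩ := exists_index_zpowers_mul_le (hQp.trans p.le_succ)
    (fun r hr => Finset.mem_Ico.2 ⟨hge r hr, Nat.lt_succ_of_le (hle r hr)⟩) hpsi
  refine ⟨x, Nat.lt_of_mul_lt_mul_right (hx.trans_lt ?_)⟩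
  obtain ⟨s, rfl⟩ := Nat.exists_eq_add_one.2 hQ
  rw [Nat.add_sub_cancel]
  nlinarith

/-! ### Abelian maximal subgroups -/

theorem isSolvable_of_sup_eq_top (N H : Subgroup G) [N.Normal]
    [Group.IsSolvable N] [Group.IsSolvable H] (h : N ⊔ H = ⊤) : Group.IsSolvable G := by
  have hmap : H.map (QuotientGroup.mk' N) = ⊤ := by
    rw [← Subgroup.map_top_of_surjective _ (QuotientGroup.mk'_surjective N), ← h,
      Subgroup.map_sup, QuotientGroup.map_mk'_self, bot_sup_eq]
  have : Group.IsSolvable (G ⧸ N) := by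
    refine Group.isSolvable_of_surjective (f := (QuotientGroup.mk' N).comp H.subtype) ?_
    rw [← MonoidHom.range_eq_top, MonoidHom.range_comp, H.range_subtype, hmap]
  exact (Group.isSolvable_iff_subgroup_quotient N).2 ⟨‹_›, ‹_›⟩

theorem mem_of_commutatorMap_mem [Finite G] {φ : G →* G} (hφ : MonoidHom.FixedPointFree φ)
    {M : Subgroup G} (hM : Set.MapsTo φ M M) {g : G} (hg : MonoidHom.commutatorMap φ g ∈ M) :
    g ∈ M := by
  have hmaps : Set.MapsTo (MonoidHom.commutatorMap φ) M M := fun x hx => M.div_mem hx (hM hx)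
  obtain ⟨x, hx⟩ := Finite.surjective_of_injective
    ((hmaps.restrict_inj).2 hφ.commutatorMap_injective.injOn) ⟨_, hg⟩
  rw [← hφ.commutatorMap_injective (congrArg Subtype.val hx)]
  exact x.2

theorem existsUnique_sylow_smul_eq [Finite G] {φ : MulAut G}
    (hφ : MonoidHom.FixedPointFree φ) (p : ℕ) [Fact p.Prime] :
    ∃! P : Sylow p G, φ • P = P := by
  have hsmul (g : G) (P : Sylow p G) : φ • g • P = φ g • φ • P := by
    rw [Sylow.smul_def, Sylow.smul_def, smul_smul, smul_smul]
    congr 1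
    ext
    simp
  obtain ⟨P₀⟩ := Sylow.nonempty (p := p) (G := G)
  obtain ⟨k, hk⟩ := MulAction.exists_smul_eq G P₀ (φ • P₀)
  obtain ⟨m, hm⟩ := hφ.commutatorMap_surjective k⁻¹
  have hfix : φ • m⁻¹ • P₀ = m⁻¹ • P₀ := by
    have hk' : k = φ m / m := by rw [← inv_div, ← MonoidHom.commutatorMap_apply, hm, inv_inv]
    rw [hsmul, ← hk, hk', smul_smul, map_inv, div_eq_mul_inv, inv_mul_cancel_left]
  refine ⟨m⁻¹ • P₀, hfix, fun Q hQ => ?_⟩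
  generalize m⁻¹ • P₀ = P at hfix
  obtain ⟨n, rfl⟩ := MulAction.exists_smul_eq G P Q
  rw [Sylow.smul_eq_iff_mem_normalizer, ← inv_mem_iff]
  refine mem_of_commutatorMap_mem (φ := φ.toMonoidHom) hφ (fun g hg => ?_) ?_
  · rw [SetLike.mem_coe, ← Sylow.smul_eq_iff_mem_normalizer] at hg ⊢
    change φ g • P = P
    conv_lhs => rw [← hfix, ← hsmul, hg, hfix]
  · rw [← Sylow.smul_eq_iff_mem_normalizer, MonoidHom.commutatorMap_apply]
    change (n⁻¹ / φ n⁻¹) • P = P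
    rw [div_eq_mul_inv, map_inv, inv_inv, mul_smul, inv_smul_eq_iff]
    conv_lhs => rw [← hfix, ← hsmul, hQ]

theorem mem_normalizer_of_conjNormal_smul_eq {N : Subgroup G} [N.Normal] {p : ℕ}
    {P : Sylow p N} {g : G} (h : (MulAut.conjNormal g : MulAut N) • P = P) :
    g ∈ Subgroup.normalizer ((P : Subgroup N).map N.subtype : Set G) := by
  rw [Subgroup.mem_normalizer_iff_map_conj_eq, Subgroup.map_map]
  nth_rw 2 [← h]
  exact ((P : Subgroup N).map_map N.subtype (MulAut.conjNormal g : MulAut N).toMonoidHom).symm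

theorem isComplement'_ker {H : Type*} [Group H] {f : G →* H} {K : Subgroup G}
    (hf : Function.Bijective (f.domRestrict K)) : f.ker.IsComplement' K := by
  refine Subgroup.isComplement'_of_disjoint_and_mul_eq_univ ?_ ?_
  · refine Subgroup.disjoint_def.2 fun {x} hx hxK => ?_
    exact congrArg Subtype.val (hf.1 (a₁ := ⟨x, hxK⟩) (a₂ := 1) (by simpa using hx))
  · refine Set.eq_univ_of_forall fun g => ?_
    obtain ⟨k, hk⟩ := hf.2 (f g)
    refine ⟨g * (k : G)⁻¹, ?_, k, k.2, inv_mul_cancel_right g _⟩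
    have : f k = f g := hk
    simp [this]

/-- A subgroup is malnormal if it meets each of its conjugates by outside elements trivially. Here
`⊤` counts as malnormal. -/
def IsMalnormal (A : Subgroup G) : Prop :=
  ∀ g ∉ A, ∀ a ∈ A, g * a * g⁻¹ ∈ A → a = 1

namespace IsMalnormal

variable {A : Subgroup G}

theorem mem_of_commute (hA : IsMalnormal A) {a g : G} (ha : a ∈ A) (ha1 : a ≠ 1)
    (h : Commute g a) : g ∈ A := by
  by_contra hg
  refine ha1 (hA g hg a ha ?_)
  rwa [h.eq, mul_inv_cancel_right]

theorem coprime_card_index [Finite G] (hA : IsMalnormal A) : (Nat.card A).Coprime A.index := by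
  refine Nat.coprime_of_dvd fun p hp hpA hpi => ?_
  have : Fact p.Prime := ⟨hp⟩
  obtain ⟨a, ha⟩ := exists_prime_orderOf_dvd_card' p hpA
  have ha1 : (a : G) ≠ 1 := fun h =>
    hp.ne_one (by rw [← ha, ← Subgroup.orderOf_coe, h, orderOf_one])
  have hcard : Nat.card (Subgroup.zpowers (a : G)) = p ^ 1 := by
    rw [Nat.card_zpowers, Subgroup.orderOf_coe, ha, pow_one]
  obtain ⟨Q, hQ⟩ := (IsPGroup.of_card hcard).exists_le_sylow
  have haQ : (a : G) ∈ Q := hQ (Subgroup.mem_zpowers _)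
  have : Nontrivial Q := ⟨⟨a, haQ⟩, 1, fun h => ha1 (congrArg Subtype.val h)⟩
  have := Q.2.center_nontrivial
  obtain ⟨z, hz1⟩ := exists_ne (1 : Subgroup.center Q)
  have hzcomm : ∀ q ∈ Q, Commute q z := fun q hq =>
    congrArg Subtype.val (Subgroup.mem_center_iff.1 z.2 ⟨q, hq⟩)
  have hzA : (z : G) ∈ A := hA.mem_of_commute a.2 ha1 (hzcomm a haQ).symm
  have hQA : (Q : Subgroup G) ≤ A := fun q hq =>
    hA.mem_of_commute hzA (by simpa using hz1) (hzcomm q hq)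
  exact Q.not_dvd_index (hpi.trans (Subgroup.index_dvd_of_le hQA))

open scoped IsMulCommutative in
theorem transfer_apply_coe [A.FiniteIndex] [IsMulCommutative A] (hA : IsMalnormal A) (a : A) :
    MonoidHom.transfer (MonoidHom.id A) (a : G) = a ^ A.index := by
  refine MonoidHom.transfer_eq_pow _ _ fun k g hk => ?_
  by_cases hg : g⁻¹ ∈ A
  · rw [setLike_mul_comm hg (A.pow_mem a.2 k), inv_mul_cancel_right]
  · rw [hA _ hg _ (A.pow_mem a.2 k) (by simpa using hk)]
    simp

open scoped IsMulCommutative in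
theorem exists_normal_isComplement' [Finite G] [IsMulCommutative A] (hA : IsMalnormal A) :
    ∃ N : Subgroup G, N.Normal ∧ N.IsComplement' A := by
  refine ⟨(MonoidHom.transfer (MonoidHom.id A)).ker, inferInstance, isComplement'_ker ?_⟩
  convert (powCoprime hA.coprime_card_index).bijective using 1
  ext a
  exact congrArg Subtype.val (hA.transfer_apply_coe a)

theorem fixedPointFree_conjNormal (hA : IsMalnormal A) {N : Subgroup G} [N.Normal]
    (hN : Disjoint N A) {a : G} (ha : a ∈ A) (ha1 : a ≠ 1) :
    MonoidHom.FixedPointFree (MulAut.conjNormal a : MulAut N) := by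
  intro n hn
  have hcomm : Commute (n : G) a := by
    have := congrArg Subtype.val hn
    rw [MulAut.conjNormal_apply] at this
    exact (mul_inv_eq_iff_eq_mul.1 this).symm
  exact Subtype.ext (Subgroup.disjoint_def.1 hN n.2 (hA.mem_of_commute ha ha1 hcomm))

theorem isSolvable [Finite G] [IsMulCommutative A] (hA : IsMalnormal A) (hmax : IsCoatom A)
    (hbot : A ≠ ⊥) : Group.IsSolvable G := by
  obtain ⟨N, hN, hcompl⟩ := hA.exists_normal_isComplement'
  obtain ⟨a, haA, ha1⟩ := A.bot_or_exists_ne_one.resolve_left hbot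
  have hN1 : Nat.card N ≠ 1 := fun h => hmax.1 (by
    rw [← hcompl.sup_eq_top, Subgroup.card_eq_one.1 h, bot_sup_eq])
  obtain ⟨p, hp, hpN⟩ := Nat.exists_prime_and_dvd hN1
  have : Fact p.Prime := ⟨hp⟩
  obtain ⟨P, hP, hPuniq⟩ :=
    existsUnique_sylow_smul_eq (hA.fixedPointFree_conjNormal hcompl.disjoint haA ha1) p
  set R : Subgroup G := (P : Subgroup N).map N.subtype
  have hAR : A ≤ Subgroup.normalizer (R : Set G) := fun b hb => by
    refine mem_normalizer_of_conjNormal_smul_eq (hPuniq _ ?_)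
    beta_reduce at hP ⊢
    rw [smul_smul, ← map_mul, setLike_mul_comm haA hb, map_mul, ← smul_smul, hP]
  have hRA : ¬ R ≤ A := fun h => by
    have : R = ⊥ := (hcompl.disjoint.mono_left (Subgroup.map_subtype_le _)).eq_bot_of_le h
    exact P.ne_bot_of_dvd_card hpN
      ((Subgroup.map_eq_bot_iff_of_injective _ N.subtype_injective).1 this)
  have hsup : R ⊔ A = ⊤ := hmax.2 _ (right_lt_sup.2 hRA)
  have : R.Normal := Subgroup.normalizer_eq_top_iff.1
    (top_le_iff.1 (hsup.ge.trans (sup_le Subgroup.le_normalizer hAR)))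
  have : Group.IsNilpotent R := (P.2.map N.subtype).isNilpotent
  have : Group.IsSolvable A := Group.isSolvable_of_comm mul_comm'
  exact isSolvable_of_sup_eq_top R A hsup

end IsMalnormal

section IsCoatom

variable {A : Subgroup G}

theorem isCoatom_of_prime_index (hA : A.index.Prime) : IsCoatom A := by
  refine ⟨fun h => hA.ne_one (Subgroup.index_eq_one.2 h), fun K hK => ?_⟩
  rw [← Subgroup.relIndex_mul_index hK.le] at hA
  rcases Nat.prime_mul_iff.1 hA with h | h
  · exact Subgroup.index_eq_one.1 h.2
  · exact absurd (Subgroup.relIndex_eq_one.1 h.2) hK.not_ge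

theorem isCoatom_map_of_surjective {H : Type*} [Group H] {f : G →* H}
    (hf : Function.Surjective f) (hmax : IsCoatom A) (hker : f.ker ≤ A) : IsCoatom (A.map f) := by
  refine ⟨fun h => hmax.1 ?_, fun K hK => ?_⟩
  · rw [← Subgroup.comap_map_eq_self hker, h, Subgroup.comap_top]
  · rw [← Subgroup.comap_lt_comap_of_surjective hf, Subgroup.comap_map_eq_self hker] at hK
    rw [← Subgroup.map_comap_eq_self_of_surjective hf K, hmax.2 _ hK,
      Subgroup.map_top_of_surjective f hf]

theorem normalizer_eq_self_of_isCoatom (hmax : IsCoatom A) (hA : ¬ A.Normal) :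
    Subgroup.normalizer (A : Set G) = A :=
  (hmax.le_iff.1 Subgroup.le_normalizer).resolve_left (hA ∘ Subgroup.normalizer_eq_top_iff.1)

theorem center_le_of_isCoatom (hmax : IsCoatom A) (hA : ¬ A.Normal) : Subgroup.center G ≤ A :=
  (Subgroup.center_le_normalizer A).trans (normalizer_eq_self_of_isCoatom hmax hA).le

theorem mem_center_of_conj_mem [IsMulCommutative A] (hmax : IsCoatom A) (hA : ¬ A.Normal)
    {a g : G} (hg : g ∉ A) (ha : a ∈ A) (hga : g * a * g⁻¹ ∈ A) : a ∈ Subgroup.center G := by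
  have hAa : A ≤ Subgroup.centralizer {a} := fun x hx =>
    Subgroup.mem_centralizer_singleton_iff.2 (setLike_mul_comm hx ha)
  rcases hmax.le_iff.1 hAa with h | h
  · exact Subgroup.centralizer_eq_top_iff_subset.1 h rfl
  refine absurd ?_ hg
  have hle : A ≤ A.map (MulAut.conj g).toMonoidHom := fun x hx => by
    have hx' : x = g * (g⁻¹ * x * g) * g⁻¹ := by group
    have hcomm : Commute x (g * a * g⁻¹) := setLike_mul_comm hx hga
    rw [hx', Commute.conj_iff] at hcomm
    exact ⟨g⁻¹ * x * g, h.le (Subgroup.mem_centralizer_singleton_iff.2 hcomm), hx'.symm⟩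
  rcases hmax.le_iff.1 hle with h | h
  · exact absurd (Subgroup.map_injective (MulAut.conj g).injective
      (h.trans (Subgroup.map_top_of_surjective _ (MulAut.conj g).surjective).symm)) hmax.1
  · rw [← normalizer_eq_self_of_isCoatom hmax hA]
    exact Subgroup.mem_normalizer_iff_map_conj_eq.2 h

theorem isMalnormal_map_mk'_center [IsMulCommutative A] (hmax : IsCoatom A) (hA : ¬ A.Normal) :
    IsMalnormal (A.map (QuotientGroup.mk' (Subgroup.center G))) := by
  have hker : (QuotientGroup.mk' (Subgroup.center G)).ker ≤ A := by
    rw [QuotientGroup.ker_mk']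
    exact center_le_of_isCoatom hmax hA
  have hmem (g : G) :
      QuotientGroup.mk' (Subgroup.center G) g ∈ A.map (QuotientGroup.mk' _) ↔ g ∈ A := by
    rw [← Subgroup.mem_comap, Subgroup.comap_map_eq_self hker]
  rintro g hg _ ⟨a, ha, rfl⟩ hga
  obtain ⟨g, rfl⟩ := QuotientGroup.mk'_surjective _ g
  rw [← map_mul, ← map_inv, ← map_mul, hmem] at hga
  rw [hmem] at hg
  exact (QuotientGroup.eq_one_iff a).2 (mem_center_of_conj_mem hmax hA hg ha hga)

theorem isSolvable_of_isCoatom_of_isMulCommutative [Finite G] [IsMulCommutative A]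
    (hmax : IsCoatom A) : Group.IsSolvable G := by
  by_cases hA : A.Normal
  · obtain ⟨x, hx⟩ := SetLike.exists_not_mem_of_ne_top A hmax.1
    have : Group.IsSolvable A := Group.isSolvable_of_comm mul_comm'
    have : Group.IsSolvable (Subgroup.zpowers x) := Group.isSolvable_of_comm mul_comm'
    exact isSolvable_of_sup_eq_top A (Subgroup.zpowers x)
      (hmax.2 _ (left_lt_sup.2 (by rwa [Subgroup.zpowers_le])))
  set f := QuotientGroup.mk' (Subgroup.center G)
  have hker : f.ker ≤ A := by
    rw [QuotientGroup.ker_mk']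
    exact center_le_of_isCoatom hmax hA
  have hbot : A.map f ≠ ⊥ := fun h => hA <| by
    have hAcenter : A = Subgroup.center G := (center_le_of_isCoatom hmax hA).antisymm' <| by
      rwa [Subgroup.map_eq_bot_iff, QuotientGroup.ker_mk'] at h
    rw [hAcenter]
    infer_instance
  have : Group.IsSolvable (G ⧸ Subgroup.center G) :=
    (isMalnormal_map_mk'_center hmax hA).isSolvable
      (isCoatom_map_of_surjective (QuotientGroup.mk'_surjective _) hmax hker) hbot
  have : Group.IsSolvable (Subgroup.center G) := Group.isSolvable_of_comm mul_comm'
  exact (Group.isSolvable_iff_subgroup_quotient (Subgroup.center G)).2 ⟨‹_›, ‹_›⟩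

end IsCoatom

/-! ### Sylow subgroups -/

section Sylow

variable [Finite G] {p : ℕ} [Fact p.Prime]

theorem card_sylow_eq_relIndex_normalizer (P : Sylow p G) {M : Subgroup G}
    (hPM : Subgroup.normalizer (P : Set G) ≤ M) :
    Nat.card (Sylow p M) = (Subgroup.normalizer (P : Set G)).relIndex M := by
  have hP := Subgroup.le_normalizer.trans hPM
  rw [(P.subtype hP).card_eq_index_normalizer]
  exact congrArg Subgroup.index (Subgroup.subgroupOf_normalizer_eq hP).symm

theorem succ_le_card_sylow (P : Sylow p G) (hP : ¬ (P : Subgroup G).Normal) :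
    p + 1 ≤ Nat.card (Sylow p G) := by
  have hne : Nat.card (Sylow p G) ≠ 1 := fun h => hP <| by
    rw [P.card_eq_index_normalizer, Subgroup.index_eq_one] at h
    exact Subgroup.normalizer_eq_top_iff.1 h
  rw [add_comm]
  exact (card_sylow_modEq_one p G).symm.add_le_of_lt
    ((Nat.one_le_iff_ne_zero.2 Nat.card_pos.ne').lt_of_ne' hne)

theorem isCoatom_normalizer (P : Sylow p G) (hP : ¬ (P : Subgroup G).Normal)
    (hlt : Nat.card (Sylow p G) < 2 * (p + 1)) :
    IsCoatom (Subgroup.normalizer (P : Set G)) := by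
  refine ⟨hP ∘ Subgroup.normalizer_eq_top_iff.1, fun M hM => ?_⟩
  have hPM := Subgroup.le_normalizer.trans hM.le
  have hrel : p + 1 ≤ (Subgroup.normalizer (P : Set G)).relIndex M := by
    rw [← card_sylow_eq_relIndex_normalizer P hM.le]
    exact succ_le_card_sylow (P.subtype hPM) fun h =>
      hM.not_ge ((Subgroup.normal_subgroupOf_iff_le_normalizer hPM).1 h)
  rw [P.card_eq_index_normalizer, ← Subgroup.relIndex_mul_index hM.le, mul_comm] at hlt
  have hindex : M.index < 2 :=
    Nat.lt_of_mul_lt_mul_right ((Nat.mul_le_mul_left _ hrel).trans_lt hlt)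
  have hne : M.index ≠ 0 := Subgroup.index_ne_zero_of_finite
  exact Subgroup.index_eq_one.1 (by lia)

theorem isCoatom_or_exists_normal_sylow_le (A : Subgroup G) [IsMulCommutative A]
    (hA : A.index < 2 * p) :
    IsCoatom A ∨ ∃ P : Sylow p G, (P : Subgroup G) ≤ A ∧ (P : Subgroup G).Normal := by
  have hpos : A.index ≠ 0 := Subgroup.index_ne_zero_of_finite
  by_cases hpA : p ∣ A.index
  · have hindex : A.index = p := Nat.eq_of_dvd_of_lt_two_mul hpos hpA hA
    exact .inl (isCoatom_of_prime_index (hindex ▸ Fact.out))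
  obtain ⟨S⟩ := Sylow.nonempty (p := p) (G := A)
  have hSindex : ¬ p ∣ ((S : Subgroup A).map A.subtype).index := by
    rw [Subgroup.index_map_subtype, (Fact.out : p.Prime).dvd_mul]
    exact not_or.2 ⟨S.not_dvd_index, hpA⟩
  let P : Sylow p G := (S.2.map A.subtype).toSylow hSindex
  have hPA : (P : Subgroup G) ≤ A := Subgroup.map_subtype_le _
  refine or_iff_not_imp_right.2 fun hP => ?_
  replace hP : ¬ (P : Subgroup G).Normal := fun h => hP ⟨P, hPA, h⟩
  have hAN : A ≤ Subgroup.normalizer (P : Set G) :=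
    (Subgroup.le_centralizer_iff.1 (hPA.trans A.le_centralizer)).trans
      (Subgroup.centralizer_le_normalizer _)
  have hindex := Subgroup.relIndex_mul_index hAN
  rw [← P.card_eq_index_normalizer] at hindex
  have hcard := succ_le_card_sylow P hP
  have hrel : A.relIndex (Subgroup.normalizer (P : Set G)) = 1 := by
    have hne : A.relIndex (Subgroup.normalizer (P : Set G)) ≠ 0 := 
      left_ne_zero_of_mul (hindex.trans_ne hpos)
    by_contra h
    have := Nat.mul_le_mul (show 2 ≤ A.relIndex (Subgroup.normalizer (P : Set G)) by lia) hcard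
    lia
  rw [hAN.antisymm (Subgroup.relIndex_eq_one.1 hrel)]
  refine isCoatom_normalizer P hP ?_
  rw [hrel, one_mul] at hindex
  lia

theorem exists_mem_sylow_orderOf_eq (P : Sylow p G) {y : G} {k : ℕ} (hy : orderOf y = p ^ k) :
    ∃ z ∈ P, orderOf z = p ^ k := by
  obtain ⟨Q, hQ⟩ := (IsPGroup.of_card (p := p) ((Nat.card_zpowers y).trans hy)).exists_le_sylow
  obtain ⟨g, rfl⟩ := MulAction.exists_smul_eq G Q P
  refine ⟨g * y * g⁻¹, ⟨y, hQ (Subgroup.mem_zpowers y), rfl⟩, ?_⟩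
  rw [← hy]
  exact orderOf_injective (MulAut.conj g).toMonoidHom (MulAut.conj g).injective y

theorem exists_isCyclic_le_sylow (hpd : p ∣ Nat.card G) {x : G}
    (hx : ¬ p ^ 2 ∣ (Subgroup.zpowers x).index) (P : Sylow p G) :
    ∃ H : Subgroup G, H ≤ (P : Subgroup G) ∧ IsCyclic H ∧
      (H.subgroupOf (P : Subgroup G)).index = p := by
  have hp : p.Prime := Fact.out
  obtain ⟨k, hk⟩ : ∃ k, (Nat.card G).factorization p = k + 1 :=
    Nat.exists_eq_add_one.2 (hp.factorization_pos_of_dvd Nat.card_pos.ne' hpd)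
  have hkx : p ^ k ∣ orderOf x := by
    have hindex : (Subgroup.zpowers x).index ≠ 0 := Subgroup.index_ne_zero_of_finite
    rw [hp.pow_dvd_iff_le_factorization hindex] at hx
    rw [hp.pow_dvd_iff_le_factorization (orderOf_pos x).ne']
    rw [← (Subgroup.zpowers x).card_mul_index, Nat.card_zpowers,
      Nat.factorization_mul (orderOf_pos x).ne' hindex, Finsupp.add_apply] at hk
    lia
  obtain ⟨z, hzP, hz⟩ := exists_mem_sylow_orderOf_eq P
    (orderOf_pow_orderOf_div (orderOf_pos x).ne' hkx)
  have hle : Subgroup.zpowers z ≤ P := by rwa [Subgroup.zpowers_le]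
  refine ⟨Subgroup.zpowers z, hle, inferInstance, ?_⟩
  refine Nat.eq_of_mul_eq_mul_left (pow_pos hp.pos k) ?_
  calc p ^ k * ((Subgroup.zpowers z).subgroupOf P).index = Nat.card P := by
        rw [← ((Subgroup.zpowers z).subgroupOf P).card_mul_index,
          Nat.card_congr (Subgroup.subgroupOfEquivOfLe hle).toEquiv, Nat.card_zpowers, hz]
    _ = p ^ k * p := by rw [P.card_eq_multiplicity, hk, pow_succ]

end Sylow

/-! ### Solvability -/

theorem normal_zpowers_of_mem (P : Subgroup G) [P.Normal] [IsCyclic P]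
    {x : G} (hx : x ∈ P) : (Subgroup.zpowers x).Normal := by
  have hconj : ∀ g : G, ∃ m : ℤ, g * x * g⁻¹ = x ^ m := fun g => by
    obtain ⟨m, hm⟩ := (MulAut.conjNormal g : MulAut P).toMonoidHom.map_cyclic
    refine ⟨m, ?_⟩
    have := congrArg Subtype.val (hm ⟨x, hx⟩)
    simpa using this
  refine ⟨?_⟩
  rintro _ ⟨k, rfl⟩ g
  obtain ⟨m, hm⟩ := hconj g
  exact ⟨m * k, (zpow_mul x m k).trans (by rw [← hm, conj_zpow])⟩

theorem orderOf_mul_le_of_normal_zpowers [Finite G] (x u : G)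
    [(Subgroup.zpowers x).Normal] : orderOf (x * u) ≤ orderOf x * orderOf u := by
  have hmem : (x * u) ^ orderOf u ∈ Subgroup.zpowers x := by
    rw [← QuotientGroup.eq_one_iff]
    have hx : (x : G ⧸ Subgroup.zpowers x) = 1 :=
      (QuotientGroup.eq_one_iff x).2 (Subgroup.mem_zpowers x)
    rw [QuotientGroup.mk_pow, QuotientGroup.mk_mul, hx, one_mul, ← QuotientGroup.mk_pow,
      pow_orderOf_eq_one, QuotientGroup.mk_one]
  refine orderOf_le_of_pow_eq_one (Nat.mul_pos (orderOf_pos x) (orderOf_pos u)) ?_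
  rw [mul_comm, pow_mul]
  exact orderOf_dvd_iff_pow_eq_one.1 (orderOf_dvd_of_mem_zpowers hmem)

theorem psi_le_mul_of_isComplement' [Fintype G] (P K : Subgroup G)
    [P.Normal] [IsCyclic P] [Fintype P] [Fintype K] (h : P.IsComplement' K) :
    psi G ≤ psi P * psi K := by
  rw [psi, psi, psi, Finset.sum_mul_sum, ← Finset.sum_product',
    ← (Equiv.ofBijective _ h).sum_comp]
  refine Finset.sum_le_sum fun x _ => ?_
  have := normal_zpowers_of_mem P x.1.2
  simpa using orderOf_mul_le_of_normal_zpowers (x.1 : G) (x.2 : G)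

theorem psiC_card_le_of_isComplement' [Fintype G] {P K : Subgroup G}
    [P.Normal] [IsCyclic P] [Fintype P] [Fintype K] (h : P.IsComplement' K)
    (hcop : (Fintype.card P).Coprime (Fintype.card K)) {c : ℕ}
    (hpsi : psiC (Fintype.card G) ≤ c * psi G) : psiC (Fintype.card K) ≤ c * psi K := by
  have hcard : Fintype.card P * Fintype.card K = Fintype.card G := by
    simpa only [Nat.card_eq_fintype_card] using h.card_mul_card
  have hpos : 0 < psi P := Finset.sum_pos (fun x _ => orderOf_pos x) ⟨1, Finset.mem_univ _⟩
  refine Nat.le_of_mul_le_mul_left ?_ hpos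
  calc psi P * psiC (Fintype.card K) = psiC (Fintype.card G) := by
        rw [← hcard, psiC_mul_of_coprime hcop, psi_eq_psiC_card]
    _ ≤ c * (psi P * psi K) :=
      hpsi.trans (Nat.mul_le_mul_left _ (psi_le_mul_of_isComplement' P K h))
    _ = psi P * (c * psi K) := mul_left_comm ..

theorem isSolvable_of_psiC_card_le [Fintype G] {Q : ℕ} (hQ : 0 < Q)
    (hge : ∀ r ∈ (Fintype.card G).primeFactors, Q ≤ r)
    (hpsi : psiC (Fintype.card G) ≤ 2 * (Q - 1) * psi G) : Group.IsSolvable G := by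
  induction hN : Fintype.card G using Nat.strong_induction_on generalizing G with
  | _ N ih =>
    subst hN
    rcases subsingleton_or_nontrivial G with hG | hG
    · infer_instance
    obtain ⟨p, hpmem, hpmax⟩ := Finset.exists_max_image (Fintype.card G).primeFactors id
      (Nat.nonempty_primeFactors.2 Fintype.one_lt_card)
    obtain ⟨hp, hpd, -⟩ := Nat.mem_primeFactors.1 hpmem
    have : Fact p.Prime := ⟨hp⟩
    obtain ⟨x, hx⟩ := exists_index_zpowers_lt hQ hpmem hge hpmax hpsi
    obtain hmax | ⟨P, hPx, hP⟩ := isCoatom_or_exists_normal_sylow_le (Subgroup.zpowers x) hx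
    · exact isSolvable_of_isCoatom_of_isMulCommutative hmax
    have : IsCyclic P := Subgroup.isCyclic_of_le hPx
    obtain ⟨K, hK⟩ := Subgroup.exists_right_complement'_of_coprime P.card_coprime_index
    have := Fintype.ofFinite P
    have := Fintype.ofFinite K
    have hcop := P.card_coprime_index
    have hcard := hK.card_mul_card
    have hpP := P.dvd_card_of_dvd_card (by rwa [Nat.card_eq_fintype_card])
    rw [hK.symm.index_eq_card] at hcop
    simp only [Nat.card_eq_fintype_card] at hcop hcard hpP
    have hlt : Fintype.card K < Fintype.card G := hcard ▸
      lt_mul_of_one_lt_left Fintype.card_pos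
        (hp.one_lt.trans_le (Nat.le_of_dvd Fintype.card_pos hpP))
    have hsub := Nat.primeFactors_mono (Dvd.intro_left _ hcard) Fintype.card_ne_zero
    have : Group.IsSolvable K := ih _ hlt (fun r hr => hge r (hsub hr))
      (psiC_card_le_of_isComplement' hK hcop hpsi) rfl
    have : Group.IsNilpotent P := P.2.isNilpotent
    exact isSolvable_of_sup_eq_top (P : Subgroup G) K hK.sup_eq_top

theorem minFac_add_one_le_two_mul {n : ℕ} (hn : n ≠ 1) (hodd : Odd n) :
    n.minFac + 1 ≤ 2 * (n.minFac - 1) := by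
  have hprime := Nat.minFac_prime hn
  have := hprime.two_le
  have : n.minFac ≠ 2 := fun h => hodd.not_two_dvd_nat (h ▸ n.minFac_dvd)
  lia

theorem solvable_of_odd_of_succ_minFac_mul_psi_ge_general [Fintype G] {p : ℕ} (hp : p.Prime)
    (hpd : p ∣ Fintype.card G) (hpmax : ∀ r : ℕ, r.Prime → r ∣ Fintype.card G → r ≤ p)
    (hpsi : psiC (Fintype.card G) ≤ 2 * ((Fintype.card G).minFac - 1) * psi G) :
    Group.IsSolvable G ∧
    ∀ P : Sylow p G, ∃ H : Subgroup G, H ≤ (P : Subgroup G) ∧ IsCyclic H ∧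
      (H.subgroupOf (P : Subgroup G)).index = p := by
  have : Fact p.Prime := ⟨hp⟩
  have hpos := Nat.minFac_pos (Fintype.card G)
  have hge : ∀ r ∈ (Fintype.card G).primeFactors, (Fintype.card G).minFac ≤ r := fun r hr =>
    Nat.minFac_le_of_dvd (Nat.prime_of_mem_primeFactors hr).two_le (Nat.dvd_of_mem_primeFactors hr)
  refine ⟨isSolvable_of_psiC_card_le hpos hge hpsi, fun P => ?_⟩
  obtain ⟨x, hx⟩ := exists_index_zpowers_lt hpos
    (Nat.mem_primeFactors.2 ⟨hp, hpd, Fintype.card_ne_zero⟩) hge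
    (fun r hr => hpmax r (Nat.prime_of_mem_primeFactors hr) (Nat.dvd_of_mem_primeFactors hr)) hpsi
  have hlt : (Subgroup.zpowers x).index < p ^ 2 :=
    hx.trans_le (sq p ▸ Nat.mul_le_mul_right p hp.two_le)
  exact exists_isCyclic_le_sylow (by rwa [Nat.card_eq_fintype_card])
    (Nat.not_dvd_of_pos_of_lt (Nat.pos_of_ne_zero Subgroup.index_ne_zero_of_finite) hlt) P

theorem solvable_of_odd_of_succ_minFac_mul_psi_ge {G : Type*} [Group G] [Fintype G] (n p : ℕ)
    (hn : Fintype.card G = n) (h1 : 1 < n) (hodd : Odd n)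
    (hp : p.Prime) (hpd : p ∣ n) (hpmax : ∀ r : ℕ, r.Prime → r ∣ n → r ≤ p)
    (hpsi : psiC n ≤ (n.minFac + 1) * psi G) :
    IsSolvable G ∧
    ∀ P : Sylow p G, ∃ H : Subgroup G, H ≤ (P : Subgroup G) ∧ IsCyclic H ∧
      (H.subgroupOf (P : Subgroup G)).index = p := by
  subst hn
  exact solvable_of_odd_of_succ_minFac_mul_psi_ge_general hp hpd hpmax
    (hpsi.trans (Nat.mul_le_mul_right _ (minFac_add_one_le_two_mul h1.ne' hodd)))
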